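/- arXiv:2003.07949 — 2 statements merged into one kernel-verified Lean document; each statement's English description precedes it below -/
import Mathlib

section
/- Let y(k) = C A^k x0 be the nominal output from an arbitrary initial state x0 ∈ ℝ^n. For every T0 ≥ ν + μ − 1 there exists N0 ∈ ℕ with N0 ≤ T0 such that Rank(Y_{N0,T0}) = Γ({y(k)}), where ν and μ are the observability and excitability indices. -/
open Matrix

noncomputable section

/-- The observability matrix `O_N = [C; CA; …; CA^{N-1}]`, with block rows indexed by `Fin N`. -/
def obsMat {n p : ℕ} (A : Matrix (Fin n) (Fin n) ℝ) (C : Matrix (Fin p) (Fin n) ℝ)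
    (N : ℕ) : Matrix (Fin N × Fin p) (Fin n) ℝ :=
  fun ir j => (C * A ^ (ir.1 : ℕ)) ir.2 j

/-- The observability index `ν = min {N : Rank O_N = Rank O_{N+j} for all j}`. -/
def obsIndex {n p : ℕ} (A : Matrix (Fin n) (Fin n) ℝ) (C : Matrix (Fin p) (Fin n) ℝ) : ℕ :=
  sInf {N : ℕ | ∀ j : ℕ, (obsMat A C (N + j)).rank = (obsMat A C N).rank}

/-- The Krylov/excitability matrix `E_N(x) = [x, Ax, …, A^{N-1} x]`. -/
def excMat {n : ℕ} (A : Matrix (Fin n) (Fin n) ℝ) (x : Fin n → ℝ) (N : ℕ) :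
    Matrix (Fin n) (Fin N) ℝ :=
  fun i k => (A ^ (k : ℕ)).mulVec x i

/-- The excitability index at `x`: `μ(x) = min {i : Rank E_i(x) = Rank E_{i+j}(x) for all j}`. -/
def excIndexAt {n : ℕ} (A : Matrix (Fin n) (Fin n) ℝ) (x : Fin n → ℝ) : ℕ :=
  sInf {i : ℕ | ∀ j : ℕ, (excMat A x (i + j)).rank = (excMat A x i).rank}

/-- The excitability index `μ = max_{x ∈ ℝⁿ} μ(x)`. -/
def excIndex {n : ℕ} (A : Matrix (Fin n) (Fin n) ℝ) : ℕ :=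
  sSup (Set.range (excIndexAt A))

/-- The Hankel matrix `Y_{N,T}` of the nominal output `y(k) = C A^k x0`; its `j`-th column is
the stacked vector `(y(j), …, y(j+N-1))`. -/
def hankelMat {n p : ℕ} (A : Matrix (Fin n) (Fin n) ℝ) (C : Matrix (Fin p) (Fin n) ℝ)
    (x0 : Fin n → ℝ) (N T : ℕ) : Matrix (Fin N × Fin p) (Fin (T - N + 1)) ℝ :=
  fun ir j => (C * A ^ ((j : ℕ) + (ir.1 : ℕ))).mulVec x0 ir.2

/-- The Hankel information `Γ({y(k)}) = sup {Rank Y_{N,T} : N ≤ T}`. -/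
def hankelInfo {n p : ℕ} (A : Matrix (Fin n) (Fin n) ℝ) (C : Matrix (Fin p) (Fin n) ℝ)
    (x0 : Fin n → ℝ) : ℕ :=
  sSup {r : ℕ | ∃ N T : ℕ, N ≤ T ∧ r = (hankelMat A C x0 N T).rank}

/-!
The Hankel matrix factors as `Y_{N,T} = O_N E_{T-N+1}(x0)`, so its rank is the dimension of the
image under `O_N` of the range of `E_{T-N+1}(x0)`. It grows when that range grows and when the
kernel of `O_N` shrinks. The kernel is minimal as soon as `N ≥ ν` and the range is maximal as soon
as `T - N + 1 ≥ μ(x0)`; for `N = ν` the latter reads `T ≥ ν + μ(x0) - 1`.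
-/

section LinearAlgebra

variable {R V W W' : Type*}

theorem finrank_map_le_finrank_map_of_ker_le_ker [Ring R] [StrongRankCondition R]
    [AddCommGroup V] [Module R V] [AddCommGroup W] [Module R W] [AddCommGroup W'] [Module R W']
    {f : V →ₗ[R] W} {g : V →ₗ[R] W'} {p q : Submodule R V} [Module.Finite R q]
    (hpq : p ≤ q) (hker : LinearMap.ker g ≤ LinearMap.ker f) :
    Module.finrank R (p.map f) ≤ Module.finrank R (q.map g) := by
  set π := (LinearMap.ker g).mkQ
  have hg : Function.Injective ((LinearMap.ker g).liftQ g le_rfl) :=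
    LinearMap.ker_eq_bot.mp (Submodule.ker_liftQ_eq_bot _ _ _ le_rfl)
  calc Module.finrank R (p.map f)
      ≤ Module.finrank R (q.map f) := Submodule.finrank_mono (Submodule.map_mono hpq)
    _ = Module.finrank R ((q.map π).map ((LinearMap.ker g).liftQ f hker)) := by
        rw [← Submodule.map_comp, Submodule.liftQ_mkQ]
    _ ≤ Module.finrank R (q.map π) := Submodule.finrank_map_le _ _
    _ = Module.finrank R ((q.map π).map ((LinearMap.ker g).liftQ g le_rfl)) :=
        (Submodule.equivMapOfInjective _ hg _).finrank_eq
    _ = Module.finrank R (q.map g) := by rw [← Submodule.map_comp, Submodule.liftQ_mkQ]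

theorem rank_mul_le_rank_mul_of_ker_le_of_range_le [CommRing R] [Nontrivial R]
    {l l' m k k' : Type*} [Fintype m] [Fintype k] [Fintype k']
    {M : Matrix l m R} {M' : Matrix l' m R} {N : Matrix m k R} {N' : Matrix m k' R}
    (hker : LinearMap.ker M'.mulVecLin ≤ LinearMap.ker M.mulVecLin)
    (hrange : LinearMap.range N.mulVecLin ≤ LinearMap.range N'.mulVecLin) :
    (M * N).rank ≤ (M' * N').rank := by
  rw [Matrix.rank, Matrix.rank, Matrix.mulVecLin_mul, Matrix.mulVecLin_mul, LinearMap.range_comp,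
    LinearMap.range_comp]
  exact finrank_map_le_finrank_map_of_ker_le_ker hrange hker

theorem rank_eq_iff_ker_mulVecLin_eq {K l l' m : Type*} [Field K] [Fintype m]
    {M : Matrix l m K} {M' : Matrix l' m K}
    (hker : LinearMap.ker M.mulVecLin ≤ LinearMap.ker M'.mulVecLin) :
    M.rank = M'.rank ↔ LinearMap.ker M.mulVecLin = LinearMap.ker M'.mulVecLin := by
  have hM := M.mulVecLin.finrank_range_add_finrank_ker
  have hM' := M'.mulVecLin.finrank_range_add_finrank_ker
  rw [← Matrix.rank] at hM hM'
  constructor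
  · intro hrank
    exact Submodule.eq_of_le_of_finrank_eq hker (by lia)
  · intro heq
    rw [heq] at hM
    lia

end LinearAlgebra

section Subspaces

variable {R V W : Type*} [CommRing R] [AddCommGroup V] [Module R V] [AddCommGroup W] [Module R W]

/-- The Krylov subspace spanned by `x, f x, …, f^{N-1} x`, i.e. the range of the excitability
matrix `E_N(x)`. -/
def krylovSubspace (f : Module.End R V) (x : V) (N : ℕ) : Submodule R V :=
  Submodule.span R ((fun k => (f ^ k) x) '' Set.Iio N)

/-- The states whose first `N` outputs `g (f^k x)`, `k < N`, vanish, i.e. the kernel of the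
observability matrix `O_N`. -/
def unobservableSubspace (f : Module.End R V) (g : V →ₗ[R] W) (N : ℕ) : Submodule R V :=
  ⨅ k < N, LinearMap.ker (g ∘ₗ f ^ k)

theorem krylovSubspace_mono (f : Module.End R V) (x : V) : Monotone (krylovSubspace f x) :=
  fun _ _ h => Submodule.span_mono (Set.image_mono (Set.Iio_subset_Iio h))

theorem unobservableSubspace_anti (f : Module.End R V) (g : V →ₗ[R] W) :
    Antitone (unobservableSubspace f g) :=
  fun _ _ h => biInf_mono fun _ hk => hk.trans_le h

theorem pow_mem_span_pow_lt_finrank [Nontrivial R] [Module.Free R V] [Module.Finite R V]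
    (f : Module.End R V) (k : ℕ) :
    f ^ k ∈ Submodule.span R ((f ^ ·) '' Set.Iio (Module.finrank R V)) := by
  classical
  have hspan := Submodule.span_range_natDegree_eq_adjoin f.charpoly_monic f.aeval_self_charpoly
  rw [f.charpoly_natDegree, Finset.coe_image, Finset.coe_range] at hspan
  rw [hspan]
  exact pow_mem (Algebra.self_mem_adjoin_singleton R f) k

theorem krylovSubspace_le_krylovSubspace_finrank [Nontrivial R] [Module.Free R V]
    [Module.Finite R V] (f : Module.End R V) (x : V) (N : ℕ) :
    krylovSubspace f x N ≤ krylovSubspace f x (Module.finrank R V) := by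
  refine Submodule.span_le.mpr ?_
  rintro _ ⟨k, -, rfl⟩
  have h := Submodule.mem_map_of_mem (f := LinearMap.applyₗ x) (pow_mem_span_pow_lt_finrank f k)
  rwa [Submodule.map_span, Set.image_image] at h

end Subspaces

section Indices

variable {n p : ℕ} (A : Matrix (Fin n) (Fin n) ℝ) (C : Matrix (Fin p) (Fin n) ℝ) (x : Fin n → ℝ)

theorem range_excMat (N : ℕ) :
    LinearMap.range (excMat A x N).mulVecLin = krylovSubspace A.toLin' x N := by
  have hcol : (excMat A x N).col = fun k : Fin N => (A.toLin' ^ (k : ℕ)) x := by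
    ext k i
    rw [← Matrix.toLin'_pow, Matrix.toLin'_apply]
    rfl
  rw [Matrix.range_mulVecLin, hcol, krylovSubspace, ← Fin.range_val, ← Set.range_comp]
  rfl

theorem ker_obsMat (N : ℕ) :
    LinearMap.ker (obsMat A C N).mulVecLin = unobservableSubspace A.toLin' C.toLin' N := by
  ext v
  have hblock (k : Fin N) (i : Fin p) :
      (obsMat A C N *ᵥ v) (k, i) = ((C * A ^ (k : ℕ)) *ᵥ v) i := rfl
  simp [unobservableSubspace, ← Matrix.toLin'_pow, funext_iff, hblock, Fin.forall_iff]

theorem rank_excMat_dim_add (j : ℕ) : (excMat A x (n + j)).rank = (excMat A x n).rank := by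
  have hrange : krylovSubspace A.toLin' x (n + j) = krylovSubspace A.toLin' x n :=
    le_antisymm (by simpa using krylovSubspace_le_krylovSubspace_finrank A.toLin' x (n + j))
      (krylovSubspace_mono _ _ (Nat.le_add_right n j))
  rw [Matrix.rank, Matrix.rank, range_excMat, range_excMat, hrange]

theorem excIndexAt_le : excIndexAt A x ≤ n :=
  Nat.sInf_le (rank_excMat_dim_add A x)

theorem excIndexAt_le_excIndex : excIndexAt A x ≤ excIndex A :=
  le_csSup ⟨n, Set.forall_mem_range.mpr (excIndexAt_le A)⟩ ⟨x, rfl⟩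

theorem rank_excMat_excIndexAt_add (j : ℕ) :
    (excMat A x (excIndexAt A x + j)).rank = (excMat A x (excIndexAt A x)).rank :=
  Nat.sInf_mem (s := {i | ∀ j, (excMat A x (i + j)).rank = (excMat A x i).rank})
    ⟨n, rank_excMat_dim_add A x⟩ j

theorem rank_obsMat_obsIndex_add (j : ℕ) :
    (obsMat A C (obsIndex A C + j)).rank = (obsMat A C (obsIndex A C)).rank := by
  obtain ⟨N, hN⟩ := IsArtinian.monotone_stabilizes
    ⟨_, (unobservableSubspace_anti A.toLin' C.toLin').dual_right⟩
  refine Nat.sInf_mem (s := {N | ∀ j, (obsMat A C (N + j)).rank = (obsMat A C N).rank})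
    ⟨N, fun j => ?_⟩ j
  have hker : LinearMap.ker (obsMat A C (N + j)).mulVecLin =
      LinearMap.ker (obsMat A C N).mulVecLin := by
    rw [ker_obsMat, ker_obsMat]
    exact (hN (N + j) (Nat.le_add_right N j)).symm
  exact (rank_eq_iff_ker_mulVecLin_eq hker.le).mpr hker

variable {A C x}

theorem range_excMat_le_of_excIndexAt_le {M : ℕ} (hM : excIndexAt A x ≤ M) (N : ℕ) :
    LinearMap.range (excMat A x N).mulVecLin ≤ LinearMap.range (excMat A x M).mulVecLin := by
  have hmono : Monotone fun N => LinearMap.range (excMat A x N).mulVecLin := by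
    simpa only [range_excMat] using krylovSubspace_mono A.toLin' x
  have hstable := Submodule.eq_of_le_of_finrank_eq (hmono (Nat.le_add_right (excIndexAt A x) N))
    (rank_excMat_excIndexAt_add A x N).symm
  calc LinearMap.range (excMat A x N).mulVecLin
      ≤ LinearMap.range (excMat A x (excIndexAt A x + N)).mulVecLin := hmono (Nat.le_add_left _ _)
    _ = LinearMap.range (excMat A x (excIndexAt A x)).mulVecLin := hstable.symm
    _ ≤ LinearMap.range (excMat A x M).mulVecLin := hmono hM

theorem ker_obsMat_le_of_obsIndex_le {M : ℕ} (hM : obsIndex A C ≤ M) (N : ℕ) :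
    LinearMap.ker (obsMat A C M).mulVecLin ≤ LinearMap.ker (obsMat A C N).mulVecLin := by
  have hanti : Antitone fun N => LinearMap.ker (obsMat A C N).mulVecLin := by
    simpa only [ker_obsMat] using unobservableSubspace_anti A.toLin' C.toLin'
  have hstable := (rank_eq_iff_ker_mulVecLin_eq
    (hanti (Nat.le_add_right (obsIndex A C) N))).mp (rank_obsMat_obsIndex_add A C N)
  calc LinearMap.ker (obsMat A C M).mulVecLin
      ≤ LinearMap.ker (obsMat A C (obsIndex A C)).mulVecLin := hanti hM
    _ = LinearMap.ker (obsMat A C (obsIndex A C + N)).mulVecLin := hstable.symm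
    _ ≤ LinearMap.ker (obsMat A C N).mulVecLin := hanti (Nat.le_add_left _ _)

theorem eq_zero_of_excIndexAt_eq_zero (h : excIndexAt A x = 0) : x = 0 := by
  have hrange := range_excMat_le_of_excIndexAt_le h.le 1
  simpa [range_excMat, krylovSubspace] using hrange

end Indices

section Hankel

variable {n p : ℕ} {A : Matrix (Fin n) (Fin n) ℝ} {C : Matrix (Fin p) (Fin n) ℝ} {x0 : Fin n → ℝ}

theorem hankelMat_eq_obsMat_mul_excMat (N T : ℕ) :
    hankelMat A C x0 N T = obsMat A C N * excMat A x0 (T - N + 1) := by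
  ext ⟨k, i⟩ j
  calc ((C * A ^ ((j : ℕ) + (k : ℕ))) *ᵥ x0) i
      = ((C * A ^ (k : ℕ)) *ᵥ (A ^ (j : ℕ) *ᵥ x0)) i := by
        rw [Matrix.mulVec_mulVec, Matrix.mul_assoc, ← pow_add, add_comm]
    _ = (obsMat A C N * excMat A x0 (T - N + 1)) (k, i) j := rfl

theorem rank_hankelMat_le_of_obsIndex_le_of_excIndexAt_le {N0 T0 : ℕ} (hN : obsIndex A C ≤ N0)
    (hT : excIndexAt A x0 ≤ T0 - N0 + 1) (N T : ℕ) :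
    (hankelMat A C x0 N T).rank ≤ (hankelMat A C x0 N0 T0).rank := by
  rw [hankelMat_eq_obsMat_mul_excMat, hankelMat_eq_obsMat_mul_excMat]
  exact rank_mul_le_rank_mul_of_ker_le_of_range_le (ker_obsMat_le_of_obsIndex_le hN N)
    (range_excMat_le_of_excIndexAt_le hT _)

theorem rank_hankelMat_zero (N T : ℕ) : (hankelMat A C 0 N T).rank = 0 := by
  have hzero : hankelMat A C 0 N T = 0 := by
    ext
    simp [hankelMat]
  rw [hzero, Matrix.rank_zero]

theorem hankelInfo_eq_rank_of_forall_rank_le {N0 T0 : ℕ} (hNT : N0 ≤ T0)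
    (hmax : ∀ N T, (hankelMat A C x0 N T).rank ≤ (hankelMat A C x0 N0 T0).rank) :
    hankelInfo A C x0 = (hankelMat A C x0 N0 T0).rank := by
  refine IsGreatest.csSup_eq ⟨⟨N0, T0, hNT, rfl⟩, ?_⟩
  rintro _ ⟨N, T, -, rfl⟩
  exact hmax N T

end Hankel

theorem minimum_horizon_length_general {n p : ℕ}
    (A : Matrix (Fin n) (Fin n) ℝ) (C : Matrix (Fin p) (Fin n) ℝ) (x0 : Fin n → ℝ)
    (T0 : ℕ) (hT0 : obsIndex A C + excIndexAt A x0 - 1 ≤ T0) :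
    ∃ N0 : ℕ, N0 ≤ T0 ∧ (hankelMat A C x0 N0 T0).rank = hankelInfo A C x0 := by
  by_cases hν : obsIndex A C ≤ T0
  · refine ⟨obsIndex A C, hν, (hankelInfo_eq_rank_of_forall_rank_le hν ?_).symm⟩
    exact rank_hankelMat_le_of_obsIndex_le_of_excIndexAt_le le_rfl (by lia)
  · -- `ν + μ(x0) - 1 ≤ T0 < ν` leaves only `T0 = ν - 1` and `μ(x0) = 0`: the output vanishes.
    obtain rfl : x0 = 0 := eq_zero_of_excIndexAt_eq_zero (A := A) (by lia)
    refine ⟨0, T0.zero_le, (hankelInfo_eq_rank_of_forall_rank_le T0.zero_le fun N T => ?_).symm⟩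
    rw [rank_hankelMat_zero, rank_hankelMat_zero]

/-- **Minimum horizon length.** For every initial state `x0` and every `T0 ≥ ν + μ − 1`,
there exists `N0 ≤ T0` such that `Rank Y_{N0,T0} = Γ({y(k)})`. -/
theorem minimum_horizon_length {n p : ℕ}
    (A : Matrix (Fin n) (Fin n) ℝ) (C : Matrix (Fin p) (Fin n) ℝ) (x0 : Fin n → ℝ)
    (T0 : ℕ) (hT0 : obsIndex A C + excIndex A - 1 ≤ T0) :
    ∃ N0 : ℕ, N0 ≤ T0 ∧ (hankelMat A C x0 N0 T0).rank = hankelInfo A C x0 := by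
  have hμ := excIndexAt_le_excIndex A x0
  exact minimum_horizon_length_general A C x0 T0 (by lia)
end
end

section
/- Let u : ℕ → ℝ^m be an attack input with u(k) = 0 for all k < T, where T ≥ ν + 1 and ν is the observability index, and let y^u denote the output of the system driven by u from initial state x0 and y^0 = C A^k x0 the nominal output from the same initial state. If y^u(k) = y^0(k) for all k ∈ ℕ, then for every N ∈ ℕ the stacked vector u_{T:T+N−1} = (u(T), …, u(T+N−1)) lies in Ker(C_N); conversely, if u_{T:T+N−1} ∈ Ker(C_N) for every N ∈ ℕ, then y^u(k) = y^0(k) for all k ∈ ℕ. -/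
open Matrix

noncomputable section

/-- The block lower-triangular Toeplitz matrix `C_N` (the `(i,j)` block is `D` if `i = j`,
`C A^{i-j-1} B` if `i > j`, and `0` if `i < j`). -/
def ctrlMat {n p m : ℕ} (A : Matrix (Fin n) (Fin n) ℝ) (B : Matrix (Fin n) (Fin m) ℝ)
    (C : Matrix (Fin p) (Fin n) ℝ) (D : Matrix (Fin p) (Fin m) ℝ) (N : ℕ) :
    Matrix (Fin N × Fin p) (Fin N × Fin m) ℝ :=
  fun ir js =>
    if (ir.1 : ℕ) = (js.1 : ℕ) then D ir.2 js.2
    else if (js.1 : ℕ) < (ir.1 : ℕ) then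
      (C * A ^ ((ir.1 : ℕ) - (js.1 : ℕ) - 1) * B) ir.2 js.2
    else 0

/-- The state trajectory of `x(k+1) = A x(k) + B u(k)` from initial state `x0`. -/
def traj {n m : ℕ} (A : Matrix (Fin n) (Fin n) ℝ) (B : Matrix (Fin n) (Fin m) ℝ)
    (u : ℕ → Fin m → ℝ) (x0 : Fin n → ℝ) : ℕ → Fin n → ℝ
  | 0 => x0
  | k + 1 => A.mulVec (traj A B u x0 k) + B.mulVec (u k)

/-- The output `y(k) = C x(k) + D u(k)` of the system driven by input `u` from `x0`. -/
def output {n p m : ℕ} (A : Matrix (Fin n) (Fin n) ℝ) (B : Matrix (Fin n) (Fin m) ℝ)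
    (C : Matrix (Fin p) (Fin n) ℝ) (D : Matrix (Fin p) (Fin m) ℝ)
    (u : ℕ → Fin m → ℝ) (x0 : Fin n → ℝ) (k : ℕ) : Fin p → ℝ :=
  C.mulVec (traj A B u x0 k) + D.mulVec (u k)

/- By linearity the deviation of the attacked output from the nominal one is the zero-state response
to `u`. Since `u` vanishes before `T`, the zero-state response vanishes before `T`
and from `T` on is the zero-state response to the shifted input `k ↦ u (T + k)`. The matrix `C_N`
maps an input to the first `N` samples of its zero-state response. -/

section

variable {n p m : ℕ} (A : Matrix (Fin n) (Fin n) ℝ) (B : Matrix (Fin n) (Fin m) ℝ)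
  (C : Matrix (Fin p) (Fin n) ℝ) (D : Matrix (Fin p) (Fin m) ℝ)

theorem traj_eq_pow_mulVec_add (u : ℕ → Fin m → ℝ) (x0 : Fin n → ℝ) (k : ℕ) :
    traj A B u x0 k = A ^ k *ᵥ x0 + traj A B u 0 k := by
  induction k with
  | zero => simp [traj]
  | succ k ih => rw [traj, traj, ih, mulVec_add, mulVec_mulVec, ← pow_succ', add_assoc]

theorem output_eq_nominal_add (u : ℕ → Fin m → ℝ) (x0 : Fin n → ℝ) (k : ℕ) :
    output A B C D u x0 k = C *ᵥ (A ^ k *ᵥ x0) + output A B C D u 0 k := by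
  rw [output, output, traj_eq_pow_mulVec_add, mulVec_add, add_assoc]

theorem traj_add (u : ℕ → Fin m → ℝ) (x0 : Fin n → ℝ) (T k : ℕ) :
    traj A B u x0 (T + k) = traj A B (fun j => u (T + j)) (traj A B u x0 T) k := by
  induction k with
  | zero => rfl
  | succ k ih => rw [← add_assoc, traj, traj, ih]

theorem output_add (u : ℕ → Fin m → ℝ) (x0 : Fin n → ℝ) (T k : ℕ) :
    output A B C D u x0 (T + k) =
      output A B C D (fun j => u (T + j)) (traj A B u x0 T) k := by
  rw [output, output, traj_add]

theorem traj_zeroState_eq_sum (u : ℕ → Fin m → ℝ) (k : ℕ) :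
    traj A B u 0 k = ∑ j ∈ Finset.range k, (A ^ (k - j - 1) * B) *ᵥ u j := by
  induction k with
  | zero => rfl
  | succ k ih =>
    have mulVec_term : ∀ j ∈ Finset.range k,
        A *ᵥ ((A ^ (k - j - 1) * B) *ᵥ u j) = (A ^ (k + 1 - j - 1) * B) *ᵥ u j := by
      intro j hj
      have exponent : k + 1 - j - 1 = k - j - 1 + 1 := by grind
      rw [mulVec_mulVec, ← Matrix.mul_assoc, ← pow_succ', exponent]
    have last_exponent : k + 1 - k - 1 = 0 := by lia
    rw [traj, ih, mulVec_sum, Finset.sum_congr rfl mulVec_term, Finset.sum_range_succ,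
      last_exponent, pow_zero, Matrix.one_mul]

theorem traj_zeroState_eq_zero {u : ℕ → Fin m → ℝ} {k : ℕ} (hu : ∀ j < k, u j = 0) :
    traj A B u 0 k = 0 := by
  rw [traj_zeroState_eq_sum]
  exact Finset.sum_eq_zero fun j hj => by rw [hu j (Finset.mem_range.mp hj), mulVec_zero]

theorem forall_output_zeroState_eq_zero_iff_shift {u : ℕ → Fin m → ℝ} {T : ℕ}
    (hu : ∀ k < T, u k = 0) :
    (∀ k, output A B C D u 0 k = 0) ↔ ∀ k, output A B C D (fun j => u (T + j)) 0 k = 0 := by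
  have shift (k : ℕ) :
      output A B C D u 0 (T + k) = output A B C D (fun j => u (T + j)) 0 k := by
    rw [output_add, traj_zeroState_eq_zero A B hu]
  refine ⟨fun h k => (shift k).symm.trans (h (T + k)), fun h k => ?_⟩
  rcases lt_or_ge k T with hk | hk
  · rw [output, traj_zeroState_eq_zero A B fun j hj => hu j (hj.trans hk), hu k hk, mulVec_zero,
      mulVec_zero, add_zero]
  · obtain ⟨i, rfl⟩ := Nat.exists_eq_add_of_le hk
    exact (shift i).trans (h i)

theorem ctrlMat_mulVec_apply (u : ℕ → Fin m → ℝ) {N : ℕ} (i : Fin N) (r : Fin p) :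
    (ctrlMat A B C D N *ᵥ fun js : Fin N × Fin m => u js.1 js.2) (i, r) =
      output A B C D u 0 i r := by
  let entry (j : ℕ) : ℝ :=
    if (i : ℕ) = j then (D *ᵥ u j) r
    else if j < i then ((C * A ^ (i - j - 1) * B) *ᵥ u j) r else 0
  have below_diagonal : ∀ j ∈ Finset.range i,
      entry j = (C *ᵥ ((A ^ (i - j - 1) * B) *ᵥ u j)) r := by
    intro j hj
    have hji : j < i := Finset.mem_range.mp hj
    simp only [entry, if_neg hji.ne', if_pos hji, mulVec_mulVec, Matrix.mul_assoc]
  have above_diagonal : ∀ j ∈ Finset.range N, j ∉ Finset.range (i + 1) → entry j = 0 := by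
    grind
  calc (ctrlMat A B C D N *ᵥ fun js : Fin N × Fin m => u js.1 js.2) (i, r)
      = ∑ j : Fin N, entry j := by
        simp only [mulVec, dotProduct, Fintype.sum_prod_type, ctrlMat, entry]
        refine Finset.sum_congr rfl fun j _ => ?_
        split_ifs <;> simp
    _ = ∑ j ∈ Finset.range (i + 1), entry j := by
        rw [← Finset.sum_range,
          Finset.sum_subset (Finset.range_subset_range.mpr i.isLt) above_diagonal]
    _ = ∑ j ∈ Finset.range i, (C *ᵥ ((A ^ (i - j - 1) * B) *ᵥ u j)) r + (D *ᵥ u i) r := by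
        rw [Finset.sum_range_succ, Finset.sum_congr rfl below_diagonal]
        simp only [entry, if_true]
    _ = output A B C D u 0 i r := by
        rw [output, traj_zeroState_eq_sum, mulVec_sum, Pi.add_apply, Finset.sum_apply]

theorem forall_ctrlMat_mulVec_eq_zero_iff (u : ℕ → Fin m → ℝ) :
    (∀ N, (ctrlMat A B C D N *ᵥ fun js : Fin N × Fin m => u js.1 js.2) = 0) ↔
      ∀ k, output A B C D u 0 k = 0 := by
  constructor
  · intro h k
    funext r
    exact (ctrlMat_mulVec_apply A B C D u (Fin.last k) r).symm.trans (congrFun (h (k + 1)) _)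
  · intro h N
    funext ⟨i, r⟩
    rw [ctrlMat_mulVec_apply, h, Pi.zero_apply, Pi.zero_apply]

theorem model_based_undetectable_attacks_general (u : ℕ → Fin m → ℝ) (x0 : Fin n → ℝ) (T : ℕ)
    (hu : ∀ k < T, u k = 0) :
    (∀ k, output A B C D u x0 k = C *ᵥ (A ^ k *ᵥ x0)) ↔
      ∀ N, (ctrlMat A B C D N *ᵥ fun js : Fin N × Fin m => u (T + js.1) js.2) = 0 := by
  calc (∀ k, output A B C D u x0 k = C *ᵥ (A ^ k *ᵥ x0))
      ↔ ∀ k, output A B C D u 0 k = 0 := by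
        simp only [output_eq_nominal_add A B C D u x0, add_eq_left]
    _ ↔ ∀ k, output A B C D (fun j => u (T + j)) 0 k = 0 :=
        forall_output_zeroState_eq_zero_iff_shift A B C D hu
    _ ↔ _ := (forall_ctrlMat_mulVec_eq_zero_iff A B C D fun j => u (T + j)).symm

end

/-- **Model-based undetectable attacks.** An attack input `u` with `u(k) = 0` for `k < T`,
where `T ≥ ν + 1`, is undetectable (the attacked output coincides with the nominal output
for all times) if and only if `u_{T:T+N-1} ∈ Ker C_N` for every `N ∈ ℕ`. -/
theorem model_based_undetectable_attacks {n p m : ℕ}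
    (A : Matrix (Fin n) (Fin n) ℝ) (B : Matrix (Fin n) (Fin m) ℝ)
    (C : Matrix (Fin p) (Fin n) ℝ) (D : Matrix (Fin p) (Fin m) ℝ)
    (u : ℕ → Fin m → ℝ) (x0 : Fin n → ℝ)
    (T : ℕ) (hT : obsIndex A C + 1 ≤ T)
    (hu : ∀ k : ℕ, k < T → u k = 0) :
    (∀ k : ℕ, output A B C D u x0 k = C.mulVec ((A ^ k).mulVec x0)) ↔
    (∀ N : ℕ,
      (ctrlMat A B C D N).mulVec (fun js : Fin N × Fin m => u (T + (js.1 : ℕ)) js.2) = 0) := by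
  exact model_based_undetectable_attacks_general A B C D u x0 T hu
end
end
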